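/- Let E be a complex Banach space, 0 < δ < 1, and let A = {z ∈ ℂ : 1−δ < |z| < 1+δ}. Let f : A → E be holomorphic and bounded. Then the Fourier coefficients of f|_𝕊 are absolutely summable, so ‖f‖ := max{ sup_{z∈A} ‖f(z)‖ , ∑_{k∈ℤ} ‖(f|_𝕊)^̂_k‖ } is finite; and there exist a holomorphic map f₊ : {z : |z| < 1+δ} → E and a holomorphic map f₋ : {z : |z| > 1−δ} → E with f₋(z) → 0 as |z| → ∞, such that f = f₊ + f₋ on A, the restrictions of f₊ and f₋ to A are bounded with absolutely summable boundary Fourier coefficients, and ‖f₊|_A‖ ≤ 2‖f‖ and ‖f₋|_A‖ ≤ 2‖f‖ (where for g ∈ {f₊|_A, f₋|_A}, ‖g‖ := max{ sup_{z∈A} ‖g(z)‖ , ∑_{k∈ℤ} ‖(g|_𝕊)^̂_k‖ }). -/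

import Mathlib

open Metric Filter

/-- The `k`-th Fourier coefficient `∫₀¹ e^{−2πikt} f(e^{2πit}) dt` of a Banach-space
valued function on the unit circle (given as a function on `ℂ`; only its values on the
circle matter). -/
noncomputable def vFourierCoeff {E : Type*} [NormedAddCommGroup E] [NormedSpace ℂ E]
    (f : ℂ → E) (k : ℤ) : E :=
  ∫ t in (0:ℝ)..1,
    Complex.exp (-(2 * (Real.pi : ℂ) * Complex.I * (k : ℂ) * (t : ℂ))) •
      f (Complex.exp (2 * (Real.pi : ℂ) * Complex.I * (t : ℂ)))

/-- The norm `max{sup-norm on the annulus {1−δ<|z|<1+δ}, ℓ¹-norm of the boundary Fourier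
coefficients}` of a function `f : ℂ → E`. -/
noncomputable def annulusWienerNorm {E : Type*} [NormedAddCommGroup E] [NormedSpace ℂ E]
    (δ : ℝ) (f : ℂ → E) : ℝ :=
  max (⨆ z : {z : ℂ | 1 - δ < ‖z‖ ∧ ‖z‖ < 1 + δ}, ‖f z‖)
    (∑' k : ℤ, ‖vFourierCoeff f k‖)

/-!
A function `f` holomorphic on an annulus around the unit circle equals its Laurent series
`∑ k : ℤ, z ^ k • a k` there: Cauchy's formula over the two boundary circles, with both kernels
expanded geometrically. Since `a k` can be computed on any circle of the annulus, it decays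
geometrically in both directions, and `a k` is the `k`-th Fourier coefficient of `f` on the unit
circle. Let `f₊` and `f₋` collect the terms with `k ≥ 0` and with `k < 0`. Their Fourier
coefficients are truncations of those of `f`, so only the supremum norms matter. The series bounds
`f₊` on `‖z‖ ≤ 1` and `f₋` on `1 ≤ ‖z‖` by `∑ ‖a k‖ ≤ ‖f‖`; on the other half of the annulus each
of them is `f` minus the other one, whence the factor `2`.
-/

/-- The `k`-th Laurent coefficient about `c` of a function holomorphic on an annulus, computed on
the circle of radius `r`. -/
noncomputable def laurentCoeff {E : Type*} [NormedAddCommGroup E] [NormedSpace ℂ E]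
    (f : ℂ → E) (c : ℂ) (r : ℝ) (k : ℤ) : E :=
  (2 * (Real.pi : ℂ) * Complex.I)⁻¹ • ∮ z in C(c, r), (z - c) ^ (-k - 1) • f z

/-- The sum of the Laurent series about `c` with coefficients `a`, as an unconditional sum over
`ℤ`. Its regular and principal parts are the sums of the truncations `(Set.Ici 0).indicator a` and
`(Set.Iio 0).indicator a`. -/
noncomputable def laurentSum {E : Type*} [NormedAddCommGroup E] [NormedSpace ℂ E]
    (a : ℤ → E) (c z : ℂ) : E :=
  ∑' k : ℤ, (z - c) ^ k • a k

/-- The maximum of the supremum norm on the annulus `lo < ‖z‖ < hi` and of the `ℓ¹`-norm of the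
Fourier coefficients on the unit circle; `annulusWienerNorm δ` is the case of the radii `1 - δ` and
`1 + δ`. -/
noncomputable def radialWienerNorm {E : Type*} [NormedAddCommGroup E] [NormedSpace ℂ E]
    (lo hi : ℝ) (f : ℂ → E) : ℝ :=
  max (⨆ z : {z : ℂ | lo < ‖z‖ ∧ ‖z‖ < hi}, ‖f z‖) (∑' k : ℤ, ‖vFourierCoeff f k‖)

section Annulus

variable {X : Type*} [PseudoMetricSpace X] {c : X} {r R lo hi : ℝ}

lemma ball_sdiff_closedBall_subset : ball c R \ closedBall c r ⊆ closedBall c R \ ball c r :=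
  Set.sdiff_subset_sdiff ball_subset_closedBall ball_subset_closedBall

lemma isOpen_ball_sdiff_closedBall : IsOpen (ball c R \ closedBall c r) :=
  isOpen_ball.sdiff isClosed_closedBall

lemma closedBall_sdiff_ball_subset (hr : lo < r) (hR : R < hi) :
    closedBall c R \ ball c r ⊆ ball c hi \ closedBall c lo :=
  Set.sdiff_subset_sdiff (closedBall_subset_ball hR) (closedBall_subset_ball hr)

lemma sphere_subset_ball_sdiff_closedBall (hr : r ∈ Set.Ioo lo hi) :
    sphere c r ⊆ ball c hi \ closedBall c lo :=
  fun _ hz ↦ ⟨hz.trans_lt hr.2, (hr.1.trans_eq hz.symm).not_ge⟩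

end Annulus

section CircleIntegral

variable {E : Type*} [NormedAddCommGroup E] [NormedSpace ℂ E] [CompleteSpace E]
  {f : ℂ → E} {c w : ℂ} {r R : ℝ}

lemma hasSum_circleIntegral_of_summable_norm {ι : Type*} {F : ι → ℂ → E} {u : ι → ℝ}
    [Countable ι] (hR : 0 ≤ R) (hF : ∀ i, ContinuousOn (F i) (sphere c R)) (hu : Summable u)
    (hFu : ∀ i, ∀ z ∈ sphere c R, ‖F i z‖ ≤ u i) :
    HasSum (fun i ↦ ∮ z in C(c, R), F i z) (∮ z in C(c, R), ∑' i, F i z) := by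
  have hlim := (tendstoUniformlyOn_tsum hu hFu).tendsto_circleIntegral_of_continuousOn hR
    (.of_forall fun t ↦ continuousOn_finsetSum t fun i _ ↦ hF i)
  refine hlim.congr fun t ↦ ?_
  exact circleIntegral.integral_fun_sum fun i _ ↦ (hF i).circleIntegrable hR

lemma circleIntegral_sub_inv_eq_zero (hr : 0 ≤ r) (hw : w ∉ closedBall c r) :
    (∮ z in C(c, r), (z - w)⁻¹) = 0 := by
  have hne : ∀ z ∈ closedBall c r, z - w ≠ 0 := fun z hz ↦
    sub_ne_zero.2 (ne_of_mem_of_not_mem hz hw)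
  have hd : DifferentiableOn ℂ (fun z ↦ (z - w)⁻¹) (closedBall c r) :=
    (differentiableOn_id.sub_const w).inv hne
  exact hd.diffContOnCl_ball subset_rfl |>.circleIntegral_eq_zero hr

lemma circleIntegral_dslope (hR : 0 ≤ R) (hf : ContinuousOn f (sphere c R))
    (hw : w ∉ sphere c R) :
    (∮ z in C(c, R), dslope f w z) =
      (∮ z in C(c, R), (z - w)⁻¹ • f z) - (∮ z in C(c, R), (z - w)⁻¹) • f w := by
  have hne : ∀ z ∈ sphere c R, z ≠ w := fun z hz ↦ ne_of_mem_of_not_mem hz hw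
  have hinv : ContinuousOn (fun z ↦ (z - w)⁻¹) (sphere c R) :=
    (continuousOn_id.sub continuousOn_const).inv₀ fun z hz ↦ sub_ne_zero.2 (hne z hz)
  have hintegral : CircleIntegrable (fun z ↦ (z - w)⁻¹ • f z) c R :=
    (hinv.smul hf).circleIntegrable hR
  have hintegral_const : CircleIntegrable (fun z ↦ (z - w)⁻¹ • f w) c R :=
    (hinv.smul continuousOn_const).circleIntegrable hR
  rw [← circleIntegral.integral_smul_const, ← circleIntegral.integral_sub hintegral hintegral_const]
  refine circleIntegral.integral_congr hR fun z hz ↦ ?_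
  simp only [dslope_of_ne _ (hne z hz), slope_def_module, smul_sub]

theorem cauchy_integral_formula_annulus (hr : 0 < r)
    (hc : ContinuousOn f (closedBall c R \ ball c r))
    (hd : DifferentiableOn ℂ f (ball c R \ closedBall c r))
    (hw : w ∈ ball c R \ closedBall c r) :
    f w = (2 * (Real.pi : ℂ) * Complex.I)⁻¹ •
      ((∮ z in C(c, R), (z - w)⁻¹ • f z) + ∮ z in C(c, r), (w - z)⁻¹ • f z) := by
  obtain ⟨hwR, hwr⟩ := hw
  have hrR : r < R := (not_le.1 hwr).trans hwR
  have hnhds : closedBall c R \ ball c r ∈ nhds w :=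
    Filter.mem_of_superset (isOpen_ball_sdiff_closedBall.mem_nhds ⟨hwR, hwr⟩)
      ball_sdiff_closedBall_subset
  have hslope : (∮ z in C(c, R), dslope f w z) = ∮ z in C(c, r), dslope f w z := by
    refine Complex.circleIntegral_eq_of_differentiable_on_annulus_off_countable hr hrR.le
      (Set.countable_singleton w) ((continuousOn_dslope hnhds).2
        ⟨hc, hd.differentiableAt (isOpen_ball_sdiff_closedBall.mem_nhds ⟨hwR, hwr⟩)⟩) fun z hz ↦ ?_
    exact (differentiableAt_dslope_of_ne hz.2).2
      (hd.differentiableAt (isOpen_ball_sdiff_closedBall.mem_nhds hz.1))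
  have hsphere : ∀ ρ, r ≤ ρ → ρ ≤ R → ContinuousOn f (sphere c ρ) := fun ρ h₁ h₂ ↦
    hc.mono fun z hz ↦ ⟨(mem_sphere.1 hz).trans_le h₂, (h₁.trans_eq (mem_sphere.1 hz).symm).not_gt⟩
  have hneg : (∮ z in C(c, r), (w - z)⁻¹ • f z) = -∮ z in C(c, r), (z - w)⁻¹ • f z := by
    rw [← neg_one_smul ℂ, ← circleIntegral.integral_smul]
    simp only [← neg_sub w, inv_neg, neg_smul, smul_neg, neg_neg, one_smul]
  rw [circleIntegral_dslope (hr.trans hrR).le (hsphere R hrR.le le_rfl) (fun h ↦ hwR.ne h),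
    circleIntegral_dslope hr.le (hsphere r le_rfl hrR.le)
      (fun h ↦ hwr (sphere_subset_closedBall h)),
    circleIntegral.integral_sub_inv_of_mem_ball hwR, circleIntegral_sub_inv_eq_zero hr.le hwr,
    zero_smul, sub_zero] at hslope
  rw [hneg, ← hslope, eq_inv_smul_iff₀ Complex.two_pi_I_ne_zero]
  abel

end CircleIntegral

section LaurentCoeff

variable {E : Type*} [NormedAddCommGroup E] [NormedSpace ℂ E] {f : ℂ → E} {c w : ℂ} {r R : ℝ}

lemma vFourierCoeff_eq_laurentCoeff (f : ℂ → E) : vFourierCoeff f = laurentCoeff f 0 1 := by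
  ext k
  have hsubst := intervalIntegral.smul_integral_comp_mul_left (a := 0) (b := 1)
    (fun θ : ℝ ↦ deriv (circleMap 0 1) θ • (circleMap 0 1 θ - 0) ^ (-k - 1) • f (circleMap 0 1 θ))
    (2 * Real.pi)
  rw [mul_zero, mul_one] at hsubst
  rw [laurentCoeff, circleIntegral, ← hsubst, ← Complex.coe_smul, smul_smul,
    ← intervalIntegral.integral_smul, vFourierCoeff]
  refine intervalIntegral.integral_congr fun t _ ↦ ?_
  have hcircle : circleMap 0 1 (2 * Real.pi * t) =
      Complex.exp (2 * (Real.pi : ℂ) * Complex.I * (t : ℂ)) := by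
    simp only [circleMap, zero_add, Complex.ofReal_one, one_mul]
    congr 1; push_cast; ring
  have hexp : Complex.exp (-(2 * (Real.pi : ℂ) * Complex.I * (k : ℂ) * (t : ℂ))) =
      Complex.exp (2 * (Real.pi : ℂ) * Complex.I * (t : ℂ)) ^ (-k) := by
    rw [← Complex.exp_int_mul]; congr 1; push_cast; ring
  simp only [deriv_circleMap, hcircle, hexp, sub_zero, smul_smul,
    zpow_sub_one₀ (Complex.exp_ne_zero _)]
  congr 1
  push_cast
  field_simp

lemma exists_norm_laurentCoeff_le (hr : 0 < r) (hf : ContinuousOn f (sphere c r)) :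
    ∃ M, ∀ k, ‖laurentCoeff f c r k‖ ≤ M * r ^ (-k) := by
  obtain ⟨M, hM⟩ := (isCompact_sphere c r).exists_bound_of_continuousOn hf
  refine ⟨M, fun k ↦ ?_⟩
  have hintegral : ∀ z ∈ sphere c r, ‖(z - c) ^ (-k - 1) • f z‖ ≤ r ^ (-k - 1) * M := fun z hz ↦ by
    rw [norm_smul, norm_zpow, mem_sphere_iff_norm.1 hz]
    gcongr
    exact hM z hz
  calc ‖laurentCoeff f c r k‖ ≤ r * (r ^ (-k - 1) * M) :=
        circleIntegral.norm_two_pi_i_inv_smul_integral_le_of_norm_le_const hr.le hintegral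
    _ = M * r ^ (-k) := by rw [zpow_sub_one₀ hr.ne']; field_simp

lemma continuousOn_sub_zpow_sphere (hr : 0 < r) (k : ℤ) :
    ContinuousOn (fun z ↦ (z - c) ^ k) (sphere c r) :=
  (continuousOn_id.sub continuousOn_const).zpow₀ k fun _ hz ↦
    .inl (sub_ne_zero.2 (ne_of_mem_sphere hz hr.ne'))

lemma laurentCoeff_eq_of_le (hr : 0 < r) (hrR : r ≤ R)
    (hc : ContinuousOn f (closedBall c R \ ball c r))
    (hd : DifferentiableOn ℂ f (ball c R \ closedBall c r)) :
    laurentCoeff f c R = laurentCoeff f c r := by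
  ext k
  have hne : ∀ z ∉ ball c r, z - c ≠ 0 := fun z hz ↦
    sub_ne_zero.2 fun h ↦ hz (h ▸ mem_ball_self hr)
  rw [laurentCoeff, laurentCoeff,
    Complex.circleIntegral_eq_of_differentiable_on_annulus_off_countable hr hrR Set.countable_empty]
  · exact ((continuousOn_id.sub continuousOn_const).zpow₀ _ fun z hz ↦ .inl (hne z hz.2)).smul hc
  · intro z hz
    have hz0 : z - c ≠ 0 := hne z fun h ↦ hz.1.2 (ball_subset_closedBall h)
    exact ((differentiableAt_id.sub_const c).zpow (.inl hz0)).smul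
      (hd.differentiableAt (isOpen_ball_sdiff_closedBall.mem_nhds hz.1))

theorem laurentCoeff_eq {lo hi : ℝ} (hlo : 0 ≤ lo)
    (hf : DifferentiableOn ℂ f (ball c hi \ closedBall c lo)) (hr : r ∈ Set.Ioo lo hi)
    (hR : R ∈ Set.Ioo lo hi) : laurentCoeff f c R = laurentCoeff f c r := by
  wlog hrR : r ≤ R generalizing r R
  · exact (this hR hr (le_of_not_ge hrR)).symm
  have hsub := closedBall_sdiff_ball_subset (c := c) hr.1 hR.2
  exact laurentCoeff_eq_of_le (hlo.trans_lt hr.1) hrR (hf.continuousOn.mono hsub)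
    (hf.mono (ball_sdiff_closedBall_subset.trans hsub))

lemma summable_mul_zpow {b : ℤ → ℝ} {s M N : ℝ} (hb : ∀ k, 0 ≤ b k) (hr : 0 < r) (hrs : r < s)
    (hsR : s < R) (hM : ∀ k, b k ≤ M * r ^ (-k)) (hN : ∀ k, b k ≤ N * R ^ (-k)) :
    Summable fun k ↦ b k * s ^ k := by
  have hs : 0 < s := hr.trans hrs
  have hR : 0 < R := hs.trans hsR
  have hnonneg : ∀ k, 0 ≤ b k * s ^ k := fun k ↦ mul_nonneg (hb k) (zpow_nonneg hs.le k)
  refine .of_nat_of_neg_add_one ?_ ?_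
  · refine .of_nonneg_of_le (fun n ↦ hnonneg n) (fun n ↦ ?_) ((summable_geometric_of_lt_one
      (by positivity) ((div_lt_one hR).2 hsR)).mul_left N)
    calc b n * s ^ (n : ℤ) ≤ N * R ^ (-n : ℤ) * s ^ (n : ℤ) := by gcongr; exact hN n
      _ = N * (s / R) ^ n := by
        rw [zpow_neg, zpow_natCast, zpow_natCast, div_pow]; ring
  · refine .of_nonneg_of_le (fun n ↦ hnonneg _) (fun n ↦ ?_) ((summable_geometric_of_lt_one
      (by positivity) ((div_lt_one hs).2 hrs)).mul_left (M * (r / s)))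
    calc b (-(n + 1)) * s ^ (-(n + 1) : ℤ)
        ≤ M * r ^ (-(-(n + 1)) : ℤ) * s ^ (-(n + 1) : ℤ) := by gcongr; exact hM _
      _ = M * (r / s) * (r / s) ^ n := by
        rw [neg_neg, zpow_neg, ← Nat.cast_succ, zpow_natCast, zpow_natCast, mul_assoc, mul_assoc,
          ← pow_succ', div_pow, div_eq_mul_inv]

theorem summable_norm_laurentCoeff_mul_zpow {lo hi s : ℝ} (hlo : 0 ≤ lo)
    (hf : DifferentiableOn ℂ f (ball c hi \ closedBall c lo)) (hr : r ∈ Set.Ioo lo hi)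
    (hs : s ∈ Set.Ioo lo hi) : Summable fun k ↦ ‖laurentCoeff f c r k‖ * s ^ k := by
  obtain ⟨r₁, hr₁⟩ := exists_between hs.1
  obtain ⟨r₂, hr₂⟩ := exists_between hs.2
  have hbound : ∀ ρ ∈ Set.Ioo lo hi, ∃ M, ∀ k, ‖laurentCoeff f c r k‖ ≤ M * ρ ^ (-k) :=
    fun ρ hρ ↦ laurentCoeff_eq hlo hf hρ hr ▸ exists_norm_laurentCoeff_le (hlo.trans_lt hρ.1)
      (hf.continuousOn.mono (sphere_subset_ball_sdiff_closedBall hρ))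
  obtain ⟨M, hM⟩ := hbound r₁ ⟨hr₁.1, hr₁.2.trans hs.2⟩
  obtain ⟨N, hN⟩ := hbound r₂ ⟨hs.1.trans hr₂.1, hr₂.2⟩
  exact summable_mul_zpow (fun k ↦ norm_nonneg _) (hlo.trans_lt hr₁.1) hr₁.2 hr₂.1 hM hN

end LaurentCoeff

section LaurentExpansion

variable {E : Type*} [NormedAddCommGroup E] [NormedSpace ℂ E] [CompleteSpace E]
  {f : ℂ → E} {c w : ℂ} {r R : ℝ}

lemma hasSum_zpow_mul_zpow_neg_sub_one {x y : ℂ} (hxy : ‖x‖ < ‖y‖) :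
    HasSum (fun n : ℕ ↦ x ^ (n : ℤ) * y ^ (-(n : ℤ) - 1)) (y - x)⁻¹ := by
  have hy : y ≠ 0 := norm_pos_iff.1 ((norm_nonneg x).trans_lt hxy)
  have hlt : ‖x / y‖ < 1 := by rwa [norm_div, div_lt_one (norm_pos_iff.2 hy)]
  convert! (hasSum_geometric_of_norm_lt_one hlt).mul_right y⁻¹ using 1
  · ext n
    rw [zpow_sub_one₀ hy, zpow_neg, zpow_natCast, zpow_natCast, div_pow]
    ring
  · rw [← mul_inv, sub_mul, one_mul, div_mul_cancel₀ _ hy]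

lemma hasSum_zpow_smul_laurentCoeff_of_kernel {ι : Type*} [Countable ι] {e : ι → ℤ} {K : ℂ → ℂ}
    (hR : 0 < R) (hf : ContinuousOn f (sphere c R))
    (hK : ∀ z ∈ sphere c R, HasSum (fun i ↦ (w - c) ^ e i * (z - c) ^ (-e i - 1)) (K z)) :
    HasSum (fun i ↦ (w - c) ^ e i • laurentCoeff f c R (e i))
      ((2 * (Real.pi : ℂ) * Complex.I)⁻¹ • ∮ z in C(c, R), K z • f z) := by
  obtain ⟨M, hM⟩ := (isCompact_sphere c R).exists_bound_of_continuousOn hf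
  have hnorm : ∀ i, ∀ z ∈ sphere c R,
      ‖(w - c) ^ e i * (z - c) ^ (-e i - 1)‖ = ‖w - c‖ ^ e i * R ^ (-e i - 1) := fun i z hz ↦ by
    rw [norm_mul, norm_zpow, norm_zpow, mem_sphere_iff_norm.1 hz]
  have hsummable : Summable fun i ↦ ‖w - c‖ ^ e i * R ^ (-e i - 1) := by
    obtain ⟨z, hz⟩ := NormedSpace.sphere_nonempty (x := c).2 hR.le
    exact (hK z hz).summable.norm.congr fun i ↦ hnorm i z hz
  have hintegral := hasSum_circleIntegral_of_summable_norm
    (F := fun i z ↦ ((w - c) ^ e i * (z - c) ^ (-e i - 1)) • f z) hR.le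
    (fun i ↦ (continuousOn_const.mul (continuousOn_sub_zpow_sphere hR _)).smul hf)
    (hsummable.mul_right M) fun i z hz ↦ by
      rw [norm_smul, hnorm i z hz]
      gcongr
      exact hM z hz
  rw [circleIntegral.integral_congr hR.le fun z hz ↦ ((hK z hz).smul_const (f z)).tsum_eq]
    at hintegral
  convert! hintegral.const_smul (2 * (Real.pi : ℂ) * Complex.I)⁻¹ using 2 with i
  simp only [laurentCoeff, mul_smul, circleIntegral.integral_smul]
  exact smul_comm _ _ _

theorem hasSum_laurentSeries {lo hi : ℝ} (hlo : 0 ≤ lo)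
    (hf : DifferentiableOn ℂ f (ball c hi \ closedBall c lo)) (hr : r ∈ Set.Ioo lo hi)
    (hw : w ∈ ball c hi \ closedBall c lo) :
    HasSum (fun k ↦ (w - c) ^ k • laurentCoeff f c r k) (f w) := by
  have hlow : lo < dist w c := not_le.1 hw.2
  have hwhi : dist w c < hi := hw.1
  obtain ⟨r₁, hr₁⟩ := exists_between hlow
  obtain ⟨r₂, hr₂⟩ := exists_between hwhi
  have hr₁0 : 0 < r₁ := hlo.trans_lt hr₁.1
  have hmem₁ : r₁ ∈ Set.Ioo lo hi := ⟨hr₁.1, hr₁.2.trans hwhi⟩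
  have hmem₂ : r₂ ∈ Set.Ioo lo hi := ⟨hlow.trans hr₂.1, hr₂.2⟩
  have hsub := closedBall_sdiff_ball_subset (c := c) hr₁.1 hr₂.2
  rw [cauchy_integral_formula_annulus hr₁0 (hf.continuousOn.mono hsub)
    (hf.mono (ball_sdiff_closedBall_subset.trans hsub))
    ⟨hr₂.1, not_le.2 hr₁.2⟩, smul_add]
  refine .of_nat_of_neg_add_one ?_ ?_
  · rw [laurentCoeff_eq hlo hf hmem₂ hr]
    refine hasSum_zpow_smul_laurentCoeff_of_kernel (e := Nat.cast) (hr₁0.trans (hr₁.2.trans hr₂.1))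
      (hf.continuousOn.mono (sphere_subset_ball_sdiff_closedBall hmem₂)) fun z hz ↦ ?_
    have hlt : ‖w - c‖ < ‖z - c‖ := by
      rw [mem_sphere_iff_norm.1 hz, ← dist_eq_norm]; exact hr₂.1
    simpa only [sub_sub_sub_cancel_right] using hasSum_zpow_mul_zpow_neg_sub_one hlt
  · rw [laurentCoeff_eq hlo hf hmem₁ hr]
    refine hasSum_zpow_smul_laurentCoeff_of_kernel (e := fun n : ℕ ↦ -((n : ℤ) + 1)) hr₁0
      (hf.continuousOn.mono (sphere_subset_ball_sdiff_closedBall hmem₁)) fun z hz ↦ ?_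
    have hlt : ‖z - c‖ < ‖w - c‖ := by
      rw [mem_sphere_iff_norm.1 hz, ← dist_eq_norm]; exact hr₁.2
    have hexp : ∀ n : ℕ, -(-(n : ℤ) - 1) - 1 = n := fun n ↦ by ring
    simpa only [sub_sub_sub_cancel_right, hexp, neg_add', mul_comm]
      using hasSum_zpow_mul_zpow_neg_sub_one hlt

end LaurentExpansion

section LaurentSum

variable {E : Type*} [NormedAddCommGroup E] [NormedSpace ℂ E] {a : ℤ → E} {c z : ℂ}
  {r lo hi : ℝ}

lemma norm_zpow_smul_indicator_Ici_le (hz : ‖z‖ ≤ r) (k : ℤ) :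
    ‖z ^ k • (Set.Ici 0).indicator a k‖ ≤ ‖a k‖ * r ^ k := by
  by_cases hk : k ∈ Set.Ici 0
  · rw [Set.indicator_of_mem hk, norm_smul, norm_zpow, mul_comm]
    gcongr
    exact zpow_le_zpow_left₀ hk (norm_nonneg z) hz
  · rw [Set.indicator_of_notMem hk, smul_zero, norm_zero]
    have hr : 0 ≤ r := (norm_nonneg z).trans hz
    positivity

lemma norm_zpow_smul_indicator_Iio_le (hr : 0 < r) (hz : r ≤ ‖z‖) (k : ℤ) :
    ‖z ^ k • (Set.Iio 0).indicator a k‖ ≤ r / ‖z‖ * (‖a k‖ * r ^ k) := by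
  have hz0 : 0 < ‖z‖ := hr.trans_le hz
  by_cases hk : k ∈ Set.Iio 0
  · have hle : r ^ (-k - 1) ≤ ‖z‖ ^ (-k - 1) :=
      zpow_le_zpow_left₀ (by have := Set.mem_Iio.1 hk; lia) hr.le hz
    have hpow : ‖z‖ ^ k ≤ r / ‖z‖ * r ^ k := by
      have hinv := inv_anti₀ (zpow_pos hr _) hle
      rw [← zpow_neg, ← zpow_neg, neg_sub, sub_neg_eq_add, add_comm, zpow_add_one₀ hz0.ne',
        zpow_add_one₀ hr.ne'] at hinv
      rw [div_mul_eq_mul_div, le_div_iff₀ hz0]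
      linarith
    rw [Set.indicator_of_mem hk, norm_smul, norm_zpow]
    calc ‖z‖ ^ k * ‖a k‖ ≤ r / ‖z‖ * r ^ k * ‖a k‖ := by gcongr
      _ = r / ‖z‖ * (‖a k‖ * r ^ k) := by ring
  · rw [Set.indicator_of_notMem hk, smul_zero, norm_zero]
    positivity

lemma norm_laurentSum_indicator_Ici_le (ha : Summable fun k ↦ ‖a k‖ * r ^ k)
    (hz : ‖z - c‖ ≤ r) :
    ‖laurentSum ((Set.Ici 0).indicator a) c z‖ ≤ ∑' k, ‖a k‖ * r ^ k :=
  tsum_of_norm_bounded ha.hasSum (norm_zpow_smul_indicator_Ici_le hz)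

lemma norm_laurentSum_indicator_Iio_le (hr : 0 < r) (ha : Summable fun k ↦ ‖a k‖ * r ^ k)
    (hz : r ≤ ‖z - c‖) :
    ‖laurentSum ((Set.Iio 0).indicator a) c z‖ ≤ r / ‖z - c‖ * ∑' k, ‖a k‖ * r ^ k :=
  tsum_of_norm_bounded (ha.hasSum.mul_left _) (norm_zpow_smul_indicator_Iio_le hr hz)

lemma tendsto_laurentSum_indicator_Iio (hr : 0 < r) (ha : Summable fun k ↦ ‖a k‖ * r ^ k) :
    Tendsto (laurentSum ((Set.Iio 0).indicator a) c) (Bornology.cobounded ℂ) (nhds 0) := by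
  have hnorm : Tendsto (fun z ↦ ‖z - c‖) (Bornology.cobounded ℂ) atTop :=
    tendsto_norm_cobounded_atTop.comp (tendsto_sub_const_cobounded c)
  have hlim : Tendsto (fun z ↦ r / ‖z - c‖ * ∑' k, ‖a k‖ * r ^ k) (Bornology.cobounded ℂ)
      (nhds 0) := by
    simpa only [zero_mul] using (hnorm.const_div_atTop r).mul_const _
  refine squeeze_zero_norm' ?_ hlim
  filter_upwards [hnorm.eventually_ge_atTop r] with z hz
  exact norm_laurentSum_indicator_Iio_le hr ha hz

variable [CompleteSpace E]

lemma laurentSum_indicator_add_compl (s : Set ℤ) (h : Summable fun k ↦ (z - c) ^ k • a k) :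
    laurentSum (s.indicator a) c z + laurentSum (sᶜ.indicator a) c z = laurentSum a c z := by
  have hind : ∀ t : Set ℤ, (fun k ↦ (z - c) ^ k • t.indicator a k) =
      t.indicator fun k ↦ (z - c) ^ k • a k := fun t ↦ by
    ext k; exact (Set.indicator_smul_apply t (fun k ↦ (z - c) ^ k) a k).symm
  simp only [laurentSum, hind]
  rw [← (h.indicator s).tsum_add (h.indicator sᶜ)]
  exact tsum_congr fun k ↦ congrFun (s.indicator_self_add_compl _) k

lemma differentiableOn_laurentSum_indicator_Ici (ha : Summable fun k ↦ ‖a k‖ * r ^ k) :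
    DifferentiableOn ℂ (laurentSum ((Set.Ici 0).indicator a) c) (ball c r) := by
  refine Complex.differentiableOn_tsum_of_summable_norm ha (fun k ↦ ?_) isOpen_ball
    fun k z hz ↦ norm_zpow_smul_indicator_Ici_le (mem_ball_iff_norm.1 hz).le k
  by_cases hk : k ∈ Set.Ici 0
  · exact ((differentiableOn_id.sub_const c).zpow (.inr hk)).smul_const _
  · simp only [Set.indicator_of_notMem hk, smul_zero, differentiableOn_const]

lemma differentiableOn_laurentSum_indicator_Iio (hr : 0 < r)
    (ha : Summable fun k ↦ ‖a k‖ * r ^ k) :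
    DifferentiableOn ℂ (laurentSum ((Set.Iio 0).indicator a) c) (closedBall c r)ᶜ := by
  have hnorm : ∀ z ∈ (closedBall c r)ᶜ, r < ‖z - c‖ := fun z hz ↦ by
    simpa only [Set.mem_compl_iff, mem_closedBall_iff_norm, not_le] using hz
  refine Complex.differentiableOn_tsum_of_summable_norm ha (fun k ↦ ?_)
    isClosed_closedBall.isOpen_compl fun k z hz ↦ ?_
  · have hne : ∀ z ∈ (closedBall c r)ᶜ, z - c ≠ 0 := fun z hz ↦
      norm_pos_iff.1 (hr.trans (hnorm z hz))
    exact ((differentiableOn_id.sub_const c).zpow (.inl hne)).smul_const _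
  · refine (norm_zpow_smul_indicator_Iio_le hr (hnorm z hz).le k).trans
      (mul_le_of_le_one_left (by positivity) ?_)
    exact div_le_one_of_le₀ (hnorm z hz).le (norm_nonneg _)

lemma differentiableOn_laurentSum_indicator_Ici_of_forall_mem_Ioo (h : lo < hi)
    (ha : ∀ s ∈ Set.Ioo lo hi, Summable fun k ↦ ‖a k‖ * s ^ k) :
    DifferentiableOn ℂ (laurentSum ((Set.Ici 0).indicator a) c) (ball c hi) := fun z hz ↦ by
  obtain ⟨s, hs, hshi⟩ := exists_between (max_lt h (mem_ball.1 hz))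
  obtain ⟨hlos, hzs⟩ := max_lt_iff.1 hs
  exact (differentiableOn_laurentSum_indicator_Ici (ha s ⟨hlos, hshi⟩)).differentiableAt
    (isOpen_ball.mem_nhds hzs) |>.differentiableWithinAt

lemma differentiableOn_laurentSum_indicator_Iio_of_forall_mem_Ioo (hlo : 0 ≤ lo) (h : lo < hi)
    (ha : ∀ s ∈ Set.Ioo lo hi, Summable fun k ↦ ‖a k‖ * s ^ k) :
    DifferentiableOn ℂ (laurentSum ((Set.Iio 0).indicator a) c) (closedBall c lo)ᶜ :=
    fun z hz ↦ by
  obtain ⟨s, hlos, hs⟩ := exists_between (lt_min h (not_le.1 hz))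
  obtain ⟨hshi, hsz⟩ := lt_min_iff.1 hs
  exact (differentiableOn_laurentSum_indicator_Iio (hlo.trans_lt hlos)
    (ha s ⟨hlos, hshi⟩)).differentiableAt
    (isClosed_closedBall.isOpen_compl.mem_nhds hsz.not_ge) |>.differentiableWithinAt

lemma circleIntegral_sub_zpow_smul (hr : r ≠ 0) (m : ℤ) (v : E) :
    (∮ z in C(c, r), (z - c) ^ m • v) =
      if m = -1 then (2 * (Real.pi : ℂ) * Complex.I) • v else 0 := by
  rw [circleIntegral.integral_smul_const]
  split_ifs with hm
  · simp only [hm, zpow_neg_one, circleIntegral.integral_sub_center_inv c hr]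
  · rw [circleIntegral.integral_sub_zpow_of_ne hm, zero_smul]

theorem laurentCoeff_laurentSum (hr : 0 < r) (ha : Summable fun k ↦ ‖a k‖ * r ^ k) :
    laurentCoeff (laurentSum a c) c r = a := by
  ext k
  have hterm : ∀ j, ∀ z ∈ sphere c r,
      (z - c) ^ (-k - 1) • (z - c) ^ j • a j = (z - c) ^ (j - k - 1) • a j := fun j z hz ↦ by
    rw [smul_smul, ← zpow_add₀ (sub_ne_zero.2 (ne_of_mem_sphere hz hr.ne'))]
    congr 2
    ring
  have hsum := hasSum_circleIntegral_of_summable_norm (F := fun j z ↦ (z - c) ^ (j - k - 1) • a j)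
    hr.le (fun j ↦ (continuousOn_sub_zpow_sphere hr _).smul continuousOn_const)
    (ha.mul_left (r ^ (-k - 1))) fun j z hz ↦ by
      rw [norm_smul, norm_zpow, mem_sphere_iff_norm.1 hz, sub_sub, sub_eq_add_neg,
        zpow_add₀ hr.ne', neg_add']
      exact le_of_eq (by ring)
  have hintegral : (∮ z in C(c, r), (z - c) ^ (-k - 1) • laurentSum a c z) =
      ∮ z in C(c, r), ∑' j, (z - c) ^ (j - k - 1) • a j := by
    refine circleIntegral.integral_congr hr.le fun z hz ↦ ?_
    simp only [laurentSum, ← tsum_const_smul'', hterm _ z hz]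
  have hsingle : HasSum (fun j ↦ ∮ z in C(c, r), (z - c) ^ (j - k - 1) • a j)
      ((2 * (Real.pi : ℂ) * Complex.I) • a k) := by
    convert! hasSum_ite_eq k ((2 * (Real.pi : ℂ) * Complex.I) • a k) using 2 with j
    rw [circleIntegral_sub_zpow_smul hr.ne']
    grind
  rw [laurentCoeff, hintegral, hsum.unique hsingle, inv_smul_smul₀ Complex.two_pi_I_ne_zero]

end LaurentSum

section RadialWienerNorm

variable {E : Type*} [NormedAddCommGroup E] {lo hi C : ℝ} {f g : ℂ → E}

lemma norm_le_two_mul_of_norm_add_le {x y : E} (hadd : ‖x + y‖ ≤ C) (hxy : ‖x‖ ≤ C ∨ ‖y‖ ≤ C) :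
    ‖x‖ ≤ 2 * C ∧ ‖y‖ ≤ 2 * C := by
  have hx : ‖x‖ ≤ ‖x + y‖ + ‖y‖ := norm_le_add_norm_add x y
  have hy : ‖y‖ ≤ ‖x + y‖ + ‖x‖ := norm_le_add_norm_add' x y
  rcases hxy with h | h <;> constructor <;> linarith [norm_nonneg x, norm_nonneg y]

variable [NormedSpace ℂ E]

lemma norm_le_radialWienerNorm (hb : ∃ M : ℝ, ∀ z : ℂ, lo < ‖z‖ → ‖z‖ < hi → ‖f z‖ ≤ M) {z : ℂ}
    (hlo : lo < ‖z‖) (hhi : ‖z‖ < hi) : ‖f z‖ ≤ radialWienerNorm lo hi f := by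
  obtain ⟨M, hM⟩ := hb
  have hbdd : BddAbove (Set.range fun z : {z : ℂ | lo < ‖z‖ ∧ ‖z‖ < hi} ↦ ‖f z‖) :=
    ⟨M, Set.forall_mem_range.2 fun z ↦ hM z z.2.1 z.2.2⟩
  exact (le_ciSup hbdd ⟨z, hlo, hhi⟩).trans (le_max_left _ _)

lemma radialWienerNorm_le (hsup : ∀ z : ℂ, lo < ‖z‖ → ‖z‖ < hi → ‖f z‖ ≤ C)
    (hsum : ∑' k, ‖vFourierCoeff f k‖ ≤ C) : radialWienerNorm lo hi f ≤ C :=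
  max_le (Real.iSup_le (fun z ↦ hsup z z.2.1 z.2.2)
    ((tsum_nonneg fun _ ↦ norm_nonneg _).trans hsum)) hsum

lemma radialWienerNorm_le_two_mul (hf : Summable fun k ↦ ‖vFourierCoeff f k‖)
    (hgf : ∀ k, ‖vFourierCoeff g k‖ ≤ ‖vFourierCoeff f k‖)
    (hsup : ∀ z : ℂ, lo < ‖z‖ → ‖z‖ < hi → ‖g z‖ ≤ 2 * radialWienerNorm lo hi f) :
    radialWienerNorm lo hi g ≤ 2 * radialWienerNorm lo hi f := by
  have hg : Summable fun k ↦ ‖vFourierCoeff g k‖ :=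
    .of_nonneg_of_le (fun _ ↦ norm_nonneg _) hgf hf
  have hle : ∑' k, ‖vFourierCoeff f k‖ ≤ radialWienerNorm lo hi f := le_max_right _ _
  have hnonneg : 0 ≤ ∑' k, ‖vFourierCoeff f k‖ := tsum_nonneg fun _ ↦ norm_nonneg _
  exact radialWienerNorm_le hsup ((hg.tsum_le_tsum hgf hf).trans (by linarith))

end RadialWienerNorm

section FourierCoeff

variable {E : Type*} [NormedAddCommGroup E] [NormedSpace ℂ E] {a : ℤ → E} {f : ℂ → E}
  {lo hi s : ℝ} {w : ℂ}

lemma setOf_norm_eq_ball_sdiff_closedBall :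
    {z : ℂ | lo < ‖z‖ ∧ ‖z‖ < hi} = ball 0 hi \ closedBall 0 lo := by
  ext z
  simp only [Set.mem_ofPred_eq, Set.mem_sdiff, mem_ball_zero_iff, mem_closedBall_zero_iff, not_le,
    and_comm]

theorem summable_norm_vFourierCoeff_mul_zpow (hlo : 0 ≤ lo) (h1 : 1 ∈ Set.Ioo lo hi)
    (hf : DifferentiableOn ℂ f {z : ℂ | lo < ‖z‖ ∧ ‖z‖ < hi}) (hs : s ∈ Set.Ioo lo hi) :
    Summable fun k ↦ ‖vFourierCoeff f k‖ * s ^ k := by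
  rw [setOf_norm_eq_ball_sdiff_closedBall] at hf
  rw [vFourierCoeff_eq_laurentCoeff]
  exact summable_norm_laurentCoeff_mul_zpow hlo hf h1 hs

variable [CompleteSpace E]

theorem hasSum_zpow_smul_vFourierCoeff (hlo : 0 ≤ lo) (h1 : 1 ∈ Set.Ioo lo hi)
    (hf : DifferentiableOn ℂ f {z : ℂ | lo < ‖z‖ ∧ ‖z‖ < hi}) (hw : lo < ‖w‖ ∧ ‖w‖ < hi) :
    HasSum (fun k ↦ (w - 0) ^ k • vFourierCoeff f k) (f w) := by
  rw [setOf_norm_eq_ball_sdiff_closedBall] at hf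
  rw [vFourierCoeff_eq_laurentCoeff]
  exact hasSum_laurentSeries hlo hf h1 (setOf_norm_eq_ball_sdiff_closedBall.subset hw)

theorem vFourierCoeff_laurentSum (ha : Summable fun k ↦ ‖a k‖) :
    vFourierCoeff (laurentSum a 0) = a := by
  rw [vFourierCoeff_eq_laurentCoeff]
  exact laurentCoeff_laurentSum one_pos (by simpa only [one_zpow, mul_one] using ha)

theorem vFourierCoeff_laurentSum_indicator (ha : Summable fun k ↦ ‖a k‖) (S : Set ℤ) :
    vFourierCoeff (laurentSum (S.indicator a) 0) = S.indicator a :=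
  vFourierCoeff_laurentSum <| .of_nonneg_of_le (fun _ ↦ norm_nonneg _)
    (fun _ ↦ norm_indicator_le_norm_self _ _) ha

lemma laurentSum_indicator_vFourierCoeff_add_eq (hlo : 0 ≤ lo) (h1 : 1 ∈ Set.Ioo lo hi)
    (hf : DifferentiableOn ℂ f {z : ℂ | lo < ‖z‖ ∧ ‖z‖ < hi}) (hw : lo < ‖w‖ ∧ ‖w‖ < hi) :
    laurentSum ((Set.Ici 0).indicator (vFourierCoeff f)) 0 w +
      laurentSum ((Set.Iio 0).indicator (vFourierCoeff f)) 0 w = f w := by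
  have hsum := hasSum_zpow_smul_vFourierCoeff hlo h1 hf hw
  rw [← Set.compl_Ici, laurentSum_indicator_add_compl _ hsum.summable, laurentSum, hsum.tsum_eq]

lemma norm_laurentSum_indicator_vFourierCoeff_le (hlo : 0 ≤ lo) (h1 : 1 ∈ Set.Ioo lo hi)
    (hf : DifferentiableOn ℂ f {z : ℂ | lo < ‖z‖ ∧ ‖z‖ < hi})
    (hb : ∃ M : ℝ, ∀ z : ℂ, lo < ‖z‖ → ‖z‖ < hi → ‖f z‖ ≤ M) (hw : lo < ‖w‖ ∧ ‖w‖ < hi) :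
    ‖laurentSum ((Set.Ici 0).indicator (vFourierCoeff f)) 0 w‖ ≤ 2 * radialWienerNorm lo hi f ∧
      ‖laurentSum ((Set.Iio 0).indicator (vFourierCoeff f)) 0 w‖ ≤
        2 * radialWienerNorm lo hi f := by
  have hsum := summable_norm_vFourierCoeff_mul_zpow hlo h1 hf h1
  have hle : ∑' k, ‖vFourierCoeff f k‖ * 1 ^ k ≤ radialWienerNorm lo hi f := by
    simp only [one_zpow, mul_one]
    exact le_max_right _ _
  refine norm_le_two_mul_of_norm_add_le ?_ ?_
  · rw [laurentSum_indicator_vFourierCoeff_add_eq hlo h1 hf hw]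
    exact norm_le_radialWienerNorm hb hw.1 hw.2
  rcases le_total ‖w‖ 1 with hw1 | hw1
  · exact .inl ((norm_laurentSum_indicator_Ici_le hsum (by rwa [sub_zero])).trans hle)
  · refine .inr ((norm_laurentSum_indicator_Iio_le one_pos hsum (by rwa [sub_zero])).trans
      ((mul_le_of_le_one_left ?_ ?_).trans hle))
    · exact tsum_nonneg fun k ↦ by positivity
    · rw [sub_zero]
      exact div_le_one_of_le₀ hw1 (norm_nonneg w)

lemma summable_norm_vFourierCoeff_laurentSum_indicator (ha : Summable fun k ↦ ‖a k‖) (S : Set ℤ) :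
    Summable fun k ↦ ‖vFourierCoeff (laurentSum (S.indicator a) 0) k‖ := by
  rw [vFourierCoeff_laurentSum_indicator ha]
  exact .of_nonneg_of_le (fun _ ↦ norm_nonneg _) (fun _ ↦ norm_indicator_le_norm_self _ _) ha

lemma radialWienerNorm_laurentSum_indicator_vFourierCoeff_le
    (hf : Summable fun k ↦ ‖vFourierCoeff f k‖) (S : Set ℤ)
    (hsup : ∀ z : ℂ, lo < ‖z‖ → ‖z‖ < hi →
      ‖laurentSum (S.indicator (vFourierCoeff f)) 0 z‖ ≤ 2 * radialWienerNorm lo hi f) :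
    radialWienerNorm lo hi (laurentSum (S.indicator (vFourierCoeff f)) 0) ≤
      2 * radialWienerNorm lo hi f := by
  refine radialWienerNorm_le_two_mul hf (fun k ↦ ?_) hsup
  rw [vFourierCoeff_laurentSum_indicator hf]
  exact norm_indicator_le_norm_self _ _

end FourierCoeff

theorem stmt_10_general {E : Type*} [NormedAddCommGroup E] [NormedSpace ℂ E] [CompleteSpace E]
    (lo hi : ℝ) (hlo : 0 ≤ lo) (hlo1 : lo < 1) (hhi : 1 < hi) (f : ℂ → E)
    (hfd : DifferentiableOn ℂ f {z : ℂ | lo < ‖z‖ ∧ ‖z‖ < hi})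
    (hfb : ∃ M : ℝ, ∀ z : ℂ, lo < ‖z‖ → ‖z‖ < hi → ‖f z‖ ≤ M) :
    (Summable fun k : ℤ ↦ ‖vFourierCoeff f k‖) ∧
    ∃ fp fm : ℂ → E,
      DifferentiableOn ℂ fp {z : ℂ | ‖z‖ < hi} ∧
      DifferentiableOn ℂ fm {z : ℂ | lo < ‖z‖} ∧
      Tendsto fm (comap (fun z : ℂ ↦ ‖z‖) atTop) (nhds 0) ∧
      (∀ z : ℂ, lo < ‖z‖ → ‖z‖ < hi → f z = fp z + fm z) ∧
      (∃ M : ℝ, ∀ z : ℂ, lo < ‖z‖ → ‖z‖ < hi → ‖fp z‖ ≤ M) ∧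
      (∃ M : ℝ, ∀ z : ℂ, lo < ‖z‖ → ‖z‖ < hi → ‖fm z‖ ≤ M) ∧
      (Summable fun k : ℤ ↦ ‖vFourierCoeff fp k‖) ∧
      (Summable fun k : ℤ ↦ ‖vFourierCoeff fm k‖) ∧
      radialWienerNorm lo hi fp ≤ 2 * radialWienerNorm lo hi f ∧
      radialWienerNorm lo hi fm ≤ 2 * radialWienerNorm lo hi f := by
  have h1 : 1 ∈ Set.Ioo lo hi := ⟨hlo1, hhi⟩
  have hlohi : lo < hi := hlo1.trans hhi
  have hall := fun s hs ↦ summable_norm_vFourierCoeff_mul_zpow (s := s) hlo h1 hfd hs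
  have hsum : Summable fun k ↦ ‖vFourierCoeff f k‖ := by
    simpa only [one_zpow, mul_one] using hall 1 h1
  have hbound := fun z (hz : lo < ‖z‖) (hz' : ‖z‖ < hi) ↦
    norm_laurentSum_indicator_vFourierCoeff_le hlo h1 hfd hfb ⟨hz, hz'⟩
  refine ⟨hsum, laurentSum ((Set.Ici 0).indicator (vFourierCoeff f)) 0,
    laurentSum ((Set.Iio 0).indicator (vFourierCoeff f)) 0, ?_, ?_, ?_,
    fun z hz hz' ↦ (laurentSum_indicator_vFourierCoeff_add_eq hlo h1 hfd ⟨hz, hz'⟩).symm,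
    ⟨_, fun z hz hz' ↦ (hbound z hz hz').1⟩, ⟨_, fun z hz hz' ↦ (hbound z hz hz').2⟩,
    summable_norm_vFourierCoeff_laurentSum_indicator hsum _,
    summable_norm_vFourierCoeff_laurentSum_indicator hsum _,
    radialWienerNorm_laurentSum_indicator_vFourierCoeff_le hsum _
      fun z hz hz' ↦ (hbound z hz hz').1,
    radialWienerNorm_laurentSum_indicator_vFourierCoeff_le hsum _
      fun z hz hz' ↦ (hbound z hz hz').2⟩
  · exact (differentiableOn_laurentSum_indicator_Ici_of_forall_mem_Ioo hlohi hall).mono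
      fun z hz ↦ mem_ball_zero_iff.2 hz
  · exact (differentiableOn_laurentSum_indicator_Iio_of_forall_mem_Ioo hlo hlohi hall).mono
      fun z (hz : lo < ‖z‖) ↦ by
        rwa [Set.mem_compl_iff, mem_closedBall_zero_iff, not_le]
  · rw [comap_norm_atTop]
    exact tendsto_laurentSum_indicator_Iio one_pos (hall 1 h1)

/-- A bounded holomorphic function `f` on the annulus
`A = {1−δ < |z| < 1+δ}` with values in a complex Banach space has absolutely summable
boundary Fourier coefficients, and splits as `f = f₊ + f₋` with `f₊` holomorphic on
`{|z| < 1+δ}`, `f₋` holomorphic on `{|z| > 1−δ}` tending to `0` at `∞`, both restrictions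
to `A` bounded with absolutely summable boundary Fourier coefficients, and
`‖f₊‖ ≤ 2‖f‖`, `‖f₋‖ ≤ 2‖f‖` for the norm `max{sup-norm, Wiener norm}` on `A`. -/
theorem stmt_10 {E : Type*} [NormedAddCommGroup E] [NormedSpace ℂ E] [CompleteSpace E]
    (δ : ℝ) (hδ0 : 0 < δ) (hδ1 : δ < 1) (f : ℂ → E)
    (hfd : DifferentiableOn ℂ f {z : ℂ | 1 - δ < ‖z‖ ∧ ‖z‖ < 1 + δ})
    (hfb : ∃ M : ℝ, ∀ z : ℂ, 1 - δ < ‖z‖ → ‖z‖ < 1 + δ → ‖f z‖ ≤ M) :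
    (Summable fun k : ℤ => ‖vFourierCoeff f k‖) ∧
    ∃ fp fm : ℂ → E,
      DifferentiableOn ℂ fp {z : ℂ | ‖z‖ < 1 + δ} ∧
      DifferentiableOn ℂ fm {z : ℂ | 1 - δ < ‖z‖} ∧
      Tendsto fm (comap (fun z : ℂ => ‖z‖) atTop) (nhds 0) ∧
      (∀ z : ℂ, 1 - δ < ‖z‖ → ‖z‖ < 1 + δ → f z = fp z + fm z) ∧
      (∃ M : ℝ, ∀ z : ℂ, 1 - δ < ‖z‖ → ‖z‖ < 1 + δ → ‖fp z‖ ≤ M) ∧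
      (∃ M : ℝ, ∀ z : ℂ, 1 - δ < ‖z‖ → ‖z‖ < 1 + δ → ‖fm z‖ ≤ M) ∧
      (Summable fun k : ℤ => ‖vFourierCoeff fp k‖) ∧
      (Summable fun k : ℤ => ‖vFourierCoeff fm k‖) ∧
      annulusWienerNorm δ fp ≤ 2 * annulusWienerNorm δ f ∧
      annulusWienerNorm δ fm ≤ 2 * annulusWienerNorm δ f :=
  stmt_10_general (1 - δ) (1 + δ) (by linarith) (by linarith) (by linarith) f hfd hfb
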